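/- Let L be the extension of DataLTL by the additional formation rule φ ::= ρ U_@ (@ ∧ τ), where ρ and τ range over position formulas (formulas containing none of the class operators X⁼, Y⁼, U⁼, S⁼ and no U_@), with semantics: w, i ⊨ ρ U_@ (@ ∧ τ) iff there exists j ≥ i with d j = d i, w, j ⊨ τ, and w, k ⊨ ρ for all k with i ≤ k < j. Then satisfiability of L-formulas over infinite 1-attributed words is undecidable: there is no computable function f from L-formulas to Bool such that f(φ) = true if and only if φ is satisfiable over infinite 1-attributed words. -/

import Mathlib

/-!
STATEMENT 1: Satisfiability of the extension `L` of DataLTL by the rule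
φ ::= ρ U_@ (@ ∧ τ) (with ρ, τ position formulas) is undecidable over
infinite 1-attributed words.
-/

namespace Stmt1

/-- Position formulas: no class operators and no `U_@`.
Atomic propositions are identified with natural numbers. -/
inductive PosFormula : Type where
  | atom : ℕ → PosFormula
  | neg  : PosFormula → PosFormula
  | or   : PosFormula → PosFormula → PosFormula
  | X    : PosFormula → PosFormula
  | Y    : PosFormula → PosFormula
  | U    : PosFormula → PosFormula → PosFormula
  | S    : PosFormula → PosFormula → PosFormula

/-- Formulas of the logic `L`: full DataLTL, plus the additional rule
`uat ρ τ` representing ρ U_@ (@ ∧ τ) where ρ, τ are position formulas. -/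
inductive LFormula : Type where
  | atom : ℕ → LFormula
  | neg  : LFormula → LFormula
  | or   : LFormula → LFormula → LFormula
  | X    : LFormula → LFormula
  | Y    : LFormula → LFormula
  | U    : LFormula → LFormula → LFormula
  | S    : LFormula → LFormula → LFormula
  | Xeq  : LFormula → LFormula
  | Yeq  : LFormula → LFormula
  | Ueq  : LFormula → LFormula → LFormula
  | Seq  : LFormula → LFormula → LFormula
  | uat  : PosFormula → PosFormula → LFormula

/-- An infinite 1-attributed word: a labeling with sets of atomic
propositions, and a data value at each position. -/
structure Word : Type where
  lab : ℕ → Set ℕ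
  d : ℕ → ℕ

/-- Satisfaction for position formulas on infinite 1-attributed words. -/
def satP (w : Word) : ℕ → PosFormula → Prop
  | i, .atom p => p ∈ w.lab i
  | i, .neg φ => ¬ satP w i φ
  | i, .or φ ψ => satP w i φ ∨ satP w i ψ
  | i, .X φ => satP w (i + 1) φ
  | i, .Y φ => 0 < i ∧ satP w (i - 1) φ
  | i, .U φ ψ => ∃ j : ℕ, i ≤ j ∧ satP w j ψ ∧
      ∀ k : ℕ, i ≤ k → k < j → satP w k φ
  | i, .S φ ψ => ∃ j : ℕ, j ≤ i ∧ satP w j ψ ∧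
      ∀ k : ℕ, j < k → k ≤ i → satP w k φ

/-- Satisfaction for `L`-formulas on infinite 1-attributed words. -/
def satL (w : Word) : ℕ → LFormula → Prop
  | i, .atom p => p ∈ w.lab i
  | i, .neg φ => ¬ satL w i φ
  | i, .or φ ψ => satL w i φ ∨ satL w i ψ
  | i, .X φ => satL w (i + 1) φ
  | i, .Y φ => 0 < i ∧ satL w (i - 1) φ
  | i, .U φ ψ => ∃ j : ℕ, i ≤ j ∧ satL w j ψ ∧
      ∀ k : ℕ, i ≤ k → k < j → satL w k φ
  | i, .S φ ψ => ∃ j : ℕ, j ≤ i ∧ satL w j ψ ∧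
      ∀ k : ℕ, j < k → k ≤ i → satL w k φ
  | i, .Xeq φ => ∃ j : ℕ, i < j ∧ w.d j = w.d i ∧
      (∀ k : ℕ, i < k → w.d k = w.d i → j ≤ k) ∧ satL w j φ
  | i, .Yeq φ => ∃ j : ℕ, j < i ∧ w.d j = w.d i ∧
      (∀ k : ℕ, k < i → w.d k = w.d i → k ≤ j) ∧ satL w j φ
  | i, .Ueq φ ψ => ∃ j : ℕ, i ≤ j ∧ w.d j = w.d i ∧ satL w j ψ ∧
      ∀ k : ℕ, i ≤ k → k < j → w.d k = w.d i → satL w k φ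
  | i, .Seq φ ψ => ∃ j : ℕ, j ≤ i ∧ w.d j = w.d i ∧ satL w j ψ ∧
      ∀ k : ℕ, j < k → k ≤ i → w.d k = w.d i → satL w k φ
  | i, .uat ρ τ => ∃ j : ℕ, i ≤ j ∧ w.d j = w.d i ∧ satP w j τ ∧
      ∀ k : ℕ, i ≤ k → k < j → satP w k ρ

/-- Satisfiability over infinite 1-attributed words. -/
def Satisfiable (φ : LFormula) : Prop :=
  ∃ w : Word, satL w 0 φ

/-- An (injective) Gödel encoding of position formulas. -/
def encodeP : PosFormula → ℕ
  | .atom p => Nat.pair 0 p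
  | .neg φ => Nat.pair 1 (encodeP φ)
  | .or φ ψ => Nat.pair 2 (Nat.pair (encodeP φ) (encodeP ψ))
  | .X φ => Nat.pair 3 (encodeP φ)
  | .Y φ => Nat.pair 4 (encodeP φ)
  | .U φ ψ => Nat.pair 5 (Nat.pair (encodeP φ) (encodeP ψ))
  | .S φ ψ => Nat.pair 6 (Nat.pair (encodeP φ) (encodeP ψ))

/-- An (injective) Gödel encoding of `L`-formulas. -/
def encodeL : LFormula → ℕ
  | .atom p => Nat.pair 0 p
  | .neg φ => Nat.pair 1 (encodeL φ)
  | .or φ ψ => Nat.pair 2 (Nat.pair (encodeL φ) (encodeL ψ))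
  | .X φ => Nat.pair 3 (encodeL φ)
  | .Y φ => Nat.pair 4 (encodeL φ)
  | .U φ ψ => Nat.pair 5 (Nat.pair (encodeL φ) (encodeL ψ))
  | .S φ ψ => Nat.pair 6 (Nat.pair (encodeL φ) (encodeL ψ))
  | .Xeq φ => Nat.pair 7 (encodeL φ)
  | .Yeq φ => Nat.pair 8 (encodeL φ)
  | .Ueq φ ψ => Nat.pair 9 (Nat.pair (encodeL φ) (encodeL ψ))
  | .Seq φ ψ => Nat.pair 10 (Nat.pair (encodeL φ) (encodeL ψ))
  | .uat ρ τ => Nat.pair 11 (Nat.pair (encodeP ρ) (encodeP τ))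

/-!
We reduce the halting problem. A run of a counter machine is written as a word whose letters are
the transitions taken; a halting run extends to an infinite one because the final state of the
machines used here is also their initial state. That consecutive transitions fit together is
expressed with `X`, and the counters are handled by the data values. Every increment carries a
value that has not occurred before, and every decrement carries the value of an increment of the
same counter as the last previous position of its class (`Y⁼`). So distinct decrements belong to
distinct earlier increments, and counters never become negative. If a counter is ever tested for
zero after an increment, then `¬zero U_@ (@ ∧ dec)` at the increment says that the corresponding
decrement comes before the next such test; hence the counter is zero whenever it is tested.
Conversely, a faithful run receives suitable data values by matching the `k`-th decrement of each
counter with its `k`-th increment.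
-/

/-! ### Counter programs -/

/-- Contents of the counters. -/
abbrev Store : Type := ℕ → ℕ

/-- Structured programs over counters: `loop c P` decrements `c` and runs `P` as long as `c` is
nonzero. -/
inductive Program : Type where
  | skip : Program
  | inc : ℕ → Program
  | seq : Program → Program → Program
  | loop : ℕ → Program → Program
deriving Encodable, DecidableEq

namespace Program

/-- `P.Exec s t`: the program `P`, started with counters `s`, terminates with counters `t`. -/
def Exec : Program → Store → Store → Prop
  | skip, s, t => t = s
  | inc c, s, t => t = Function.update s c (s c + 1)
  | seq P Q, s, t => ∃ u, P.Exec s u ∧ Q.Exec u t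
  | loop c P, s, t => Relation.ReflTransGen
      (fun u v => u c ≠ 0 ∧ P.Exec (Function.update u c (u c - 1)) v) s t ∧ t c = 0

/-- `P.Yields s t`: the program `P`, started with counters `s`, terminates, and only with
counters `t`. -/
def Yields (P : Program) (s t : Store) : Prop :=
  ∀ u, P.Exec s u ↔ u = t

theorem yields_skip (s : Store) : skip.Yields s s :=
  fun _ => Iff.rfl

theorem yields_inc (c : ℕ) (s : Store) : (inc c).Yields s (Function.update s c (s c + 1)) :=
  fun _ => Iff.rfl

theorem Yields.exec_seq_iff {P Q : Program} {s t u : Store} (h : P.Yields s t) :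
    (seq P Q).Exec s u ↔ Q.Exec t u := by
  simp only [Exec, h _, exists_eq_left]

theorem Yields.seq {P Q : Program} {s t u : Store} (hP : P.Yields s t) (hQ : Q.Yields t u) :
    (seq P Q).Yields s u :=
  fun v => hP.exec_seq_iff.trans (hQ v)

theorem exec_loop_iff_of_chain {c : ℕ} {P : Program} {G : ℕ → Store}
    (hG : ∀ k, G k c ≠ 0 → P.Yields (Function.update (G k) c (G k c - 1)) (G (k + 1)))
    (t : Store) :
    (loop c P).Exec (G 0) t ↔ ∃ k, G k c = 0 ∧ (∀ j < k, G j c ≠ 0) ∧ t = G k := by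
  constructor
  · rintro ⟨hreach, htc⟩
    suffices h : ∃ k, (∀ j < k, G j c ≠ 0) ∧ t = G k by
      obtain ⟨k, hk, rfl⟩ := h
      exact ⟨k, htc, hk, rfl⟩
    clear htc
    induction hreach with
    | refl => exact ⟨0, by simp, rfl⟩
    | tail _ hstep ih =>
      obtain ⟨k, hk, rfl⟩ := ih
      exact ⟨k + 1, Nat.forall_lt_succ_right.2 ⟨hk, hstep.1⟩, (hG k hstep.1 _).1 hstep.2⟩
  · rintro ⟨k, hk0, hk, rfl⟩
    refine ⟨?_, hk0⟩
    clear hk0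
    induction k with
    | zero => exact .refl
    | succ k ih =>
      obtain ⟨hlt, hkc⟩ := Nat.forall_lt_succ_right.1 hk
      exact (ih hlt).tail ⟨hkc, (hG k hkc _).2 rfl⟩

theorem yields_loop_of_countdown {c n : ℕ} {P : Program} {G : ℕ → Store}
    (hc : ∀ k, G k c = n - k)
    (hG : ∀ k < n, P.Yields (Function.update (G k) c (n - (k + 1))) (G (k + 1))) :
    (loop c P).Yields (G 0) (G n) := by
  intro t
  rw [exec_loop_iff_of_chain fun k hk => ?_]
  · simp only [hc]
    constructor
    · rintro ⟨k, hk0, hk, rfl⟩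
      obtain rfl : k = n := by
        by_contra hne
        exact hk n (by omega) (Nat.sub_self n)
      rfl
    · rintro rfl
      exact ⟨n, Nat.sub_self n, fun j hj => by omega, rfl⟩
  · rw [hc] at hk ⊢
    exact hG k (by omega)

/-- Sets the counter `r` to zero. -/
def clear (r : ℕ) : Program := loop r skip

theorem yields_clear (r : ℕ) (s : Store) : (clear r).Yields s (Function.update s r 0) := by
  let G : ℕ → Store := fun k => Function.update s r (s r - k)
  have hloop : (clear r).Yields (G 0) (G (s r)) :=
    yields_loop_of_countdown (by simp [G]) fun k _ => by simpa [G] using yields_skip _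
  simpa [G] using hloop

/-- Adds the counter `a` to the counter `o` and sets `a` to zero. -/
def move (a o : ℕ) : Program := loop a (inc o)

theorem yields_move {a o : ℕ} (hao : a ≠ o) (s : Store) :
    (move a o).Yields s (Function.update (Function.update s a 0) o (s o + s a)) := by
  let G : ℕ → Store := fun k => Function.update (Function.update s a (s a - k)) o (s o + k)
  have hloop : (move a o).Yields (G 0) (G (s a)) :=
    yields_loop_of_countdown (by simp [G, hao]) fun k _ => by
      convert yields_inc o _ using 1
      funext r
      simp only [G, Function.update_apply]
      grind
  simpa [G] using hloop

/-- Adds the counter `a` to the counter `o`, using the empty counter `tmp` to restore `a`. -/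
def copy (a o tmp : ℕ) : Program := seq (loop a (seq (inc o) (inc tmp))) (move tmp a)

theorem yields_copy {a o tmp : ℕ} (hao : a ≠ o) (hat : a ≠ tmp) (hot : o ≠ tmp) {s : Store}
    (hs : s tmp = 0) : (copy a o tmp).Yields s (Function.update s o (s o + s a)) := by
  let G : ℕ → Store := fun k =>
    Function.update (Function.update (Function.update s a (s a - k)) o (s o + k)) tmp k
  have hloop : (loop a (seq (inc o) (inc tmp))).Yields (G 0) (G (s a)) :=
    yields_loop_of_countdown (by simp [G, hao, hat]) fun k _ => by
      convert (yields_inc o _).seq (yields_inc tmp _) using 1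
      funext r
      simp only [G, Function.update_apply]
      grind
  have hstart : G 0 = s := by simpa [G] using hs.symm
  rw [hstart] at hloop
  unfold copy
  convert hloop.seq (yields_move hat.symm _) using 1
  funext r
  simp only [G, Function.update_apply]
  grind

end Program

/-! ### Counter programs compute all partial recursive functions -/

theorem mem_mOfFn_iff {α : Type*} {n : ℕ} {p : Fin n → Part α} {v : List.Vector α n} :
    v ∈ List.Vector.mOfFn p ↔ ∀ i, v.get i ∈ p i := by
  induction n with
  | zero => simp [List.Vector.mOfFn, List.Vector.eq_nil v]
  | succ n ih =>
    obtain ⟨a, v, rfl⟩ := v.exists_eq_cons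
    simp only [List.Vector.mOfFn, Part.bind_eq_bind, Part.pure_eq_some, Part.mem_bind_iff, ih,
      Part.mem_some_iff, Fin.forall_fin_succ, List.Vector.get_zero, List.Vector.head_cons,
      List.Vector.get_cons_succ]
    constructor
    · rintro ⟨_, ha, _, hv, heq⟩
      obtain ⟨rfl, rfl⟩ := (List.Vector.eq_cons_iff ..).1 heq
      exact ⟨ha, hv⟩
    · rintro ⟨ha, hv⟩
      exact ⟨a, ha, v, hv, rfl⟩

theorem mem_mOfFn_bind_iff {n : ℕ} {p : Fin n → Part ℕ} {f : List.Vector ℕ n →. ℕ} {z : ℕ} :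
    z ∈ List.Vector.mOfFn p >>= f ↔
      ∃ y : ℕ → ℕ, (∀ i, y i ∈ p i) ∧ z ∈ f (List.Vector.ofFn fun i : Fin n => y i) := by
  refine Part.mem_bind_iff.trans ⟨?_, ?_⟩
  · rintro ⟨u, hu, hz⟩
    refine ⟨fun k => if hk : k < n then u.get ⟨k, hk⟩ else 0, ?_, ?_⟩
    · simpa using mem_mOfFn_iff.1 hu
    · simpa using hz
  · rintro ⟨y, hy, hz⟩
    exact ⟨_, mem_mOfFn_iff.2 (by simpa using hy), hz⟩

theorem mem_rfind_decide_iff {p : ℕ → Prop} [DecidablePred p] {k : ℕ} :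
    (k ∈ Nat.rfind fun j => Part.some (decide (p j))) ↔ p k ∧ ∀ j < k, ¬ p j :=
  Nat.mem_rfind.trans (by simp)

/-- `f` is computed by counter programs: for all argument counters `ins` and every other counter
`o` below a bound `b` there is a program that, if `o` and all counters from `b` on are empty,
terminates iff `f` is defined on the arguments, and then changes nothing but to put the value
of `f` into `o`. The counters from `b` on serve as scratch memory. -/
def Computes {n : ℕ} (f : List.Vector ℕ n →. ℕ) : Prop :=
  ∀ (ins : Fin n → ℕ) (o b : ℕ), (∀ i, ins i < b) → o < b → (∀ i, ins i ≠ o) →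
    ∃ P : Program, ∀ s : Store, (∀ r, b ≤ r → s r = 0) → s o = 0 → ∀ t,
      P.Exec s t ↔ ∃ y ∈ f (List.Vector.ofFn fun i => s (ins i)), t = Function.update s o y

namespace Computes

open Program

theorem total_iff {n : ℕ} {f : List.Vector ℕ n → ℕ} :
    Computes (fun v => Part.some (f v)) ↔
      ∀ (ins : Fin n → ℕ) (o b : ℕ), (∀ i, ins i < b) → o < b → (∀ i, ins i ≠ o) →
        ∃ P : Program, ∀ s : Store, (∀ r, b ≤ r → s r = 0) → s o = 0 →
          P.Yields s (Function.update s o (f (List.Vector.ofFn fun i => s (ins i)))) := by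
  simp only [Computes, Yields, Part.mem_some_iff, exists_eq_left]

theorem zero : Computes (fun _ : List.Vector ℕ 0 => Part.some 0) := by
  refine total_iff.2 fun ins o b _ _ _ => ⟨skip, fun s _ ho => ?_⟩
  simpa [← ho] using yields_skip s

theorem get {n : ℕ} (i : Fin n) : Computes (fun v : List.Vector ℕ n => Part.some (v.get i)) := by
  refine total_iff.2 fun ins o b hins ho hne => ⟨copy (ins i) o b, fun s hs hso => ?_⟩
  simpa [hso] using yields_copy (hne i) (hins i).ne ho.ne (hs b le_rfl)

theorem succ : Computes (fun v : List.Vector ℕ 1 => Part.some v.head.succ) := by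
  refine total_iff.2 fun ins o b hins ho hne =>
    ⟨seq (copy (ins 0) o b) (inc o), fun s hs hso => ?_⟩
  simpa [hso] using (yields_copy (hne 0) (hins 0).ne ho.ne (hs b le_rfl)).seq (yields_inc o _)

/-- The program for primitive recursion: after `k` rounds, counter `b` holds the `k`-th value,
counter `b + 1` holds `k` and counter `b + 2` the number of rounds to go; `b + 3` receives the
value of the step function. -/
def precProgram (base step : Program) (arg o b : ℕ) : Program :=
  seq base <| seq (copy arg (b + 2) (b + 4)) <|
    seq (loop (b + 2) (seq step (seq (clear b) (seq (move (b + 3) b) (inc (b + 1)))))) <|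
      seq (move b o) (clear (b + 1))

/-- The counters after `k` of the `n` rounds of `precProgram` computing the sequence `R`. -/
def precStore (s : Store) (b n : ℕ) (R : ℕ → ℕ) (k : ℕ) : Store :=
  Function.update (Function.update (Function.update s b (R k)) (b + 1) k) (b + 2) (n - k)

theorem yields_precProgram {base step : Program} {arg o b : ℕ} {s : Store} {R : ℕ → ℕ}
    (harg : arg < b) (ho : o < b) (hs : ∀ r, b ≤ r → s r = 0) (hso : s o = 0)
    (hbase : base.Yields s (Function.update s b (R 0)))
    (hstep : ∀ k m, step.Yields
      (Function.update (precStore s b (s arg) R k) (b + 2) m)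
      (Function.update (Function.update (precStore s b (s arg) R k) (b + 2) m) (b + 3)
        (R (k + 1)))) :
    (precProgram base step arg o b).Yields s (Function.update s o (R (s arg))) := by
  have hs1 : s (b + 1) = 0 := hs (b + 1) (by omega)
  have hs2 : s (b + 2) = 0 := hs (b + 2) (by omega)
  have hs3 : s (b + 3) = 0 := hs (b + 3) (by omega)
  have hs4 : s (b + 4) = 0 := hs (b + 4) (by omega)
  have hcopy : (copy arg (b + 2) (b + 4)).Yields (Function.update s b (R 0))
      (precStore s b (s arg) R 0) := by
    convert yields_copy (a := arg) (o := b + 2) (tmp := b + 4) (by omega) (by omega) (by omega)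
      (s := Function.update s b (R 0)) (by simp [hs4]) using 1
    funext r
    simp only [precStore, Function.update_apply]
    grind
  have hloop : (loop (b + 2) (seq step (seq (clear b) (seq (move (b + 3) b) (inc (b + 1)))))).Yields
      (precStore s b (s arg) R 0) (precStore s b (s arg) R (s arg)) := by
    refine yields_loop_of_countdown (by simp [precStore]) fun k _ => ?_
    convert (hstep k _).seq ((yields_clear b _).seq
      ((yields_move (a := b + 3) (o := b) (by omega) _).seq (yields_inc (b + 1) _))) using 1
    funext r
    simp only [precStore, Function.update_apply]
    grind
  have hfinish : (seq (move b o) (clear (b + 1))).Yields (precStore s b (s arg) R (s arg))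
      (Function.update s o (R (s arg))) := by
    convert (yields_move ho.ne' _).seq (yields_clear (b + 1) _) using 1
    funext r
    simp only [precStore, Function.update_apply]
    grind
  exact hbase.seq (hcopy.seq (hloop.seq hfinish))

theorem prec {n : ℕ} {f : List.Vector ℕ n → ℕ} {g : List.Vector ℕ (n + 2) → ℕ}
    (hf : Computes (fun v => Part.some (f v))) (hg : Computes (fun v => Part.some (g v))) :
    Computes (fun v : List.Vector ℕ (n + 1) => Part.some
      (v.head.rec (f v.tail) fun y IH => g (y ::ᵥ IH ::ᵥ v.tail) : ℕ)) := by
  refine total_iff.2 fun ins o b hins ho _ => ?_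
  have hlt : ∀ i : Fin n, ins i.succ < b := fun i => hins i.succ
  obtain ⟨base, hbase⟩ := total_iff.1 hf (fun i => ins i.succ) b (b + 5)
    (fun i => (hlt i).trans (by omega)) (by omega) (fun i => (hlt i).ne)
  obtain ⟨step, hstep⟩ := total_iff.1 hg (Fin.cons (b + 1) (Fin.cons b fun i => ins i.succ))
    (b + 3) (b + 5)
    (Fin.cases (by simp) (Fin.cases (by simp) fun i => (hlt i).trans (by omega))) (by omega)
    (Fin.cases (by simp) (Fin.cases (by simp) fun i => ((hlt i).trans (by omega)).ne))
  refine ⟨precProgram base step (ins 0) o b, fun s hs hso => ?_⟩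
  let v := List.Vector.ofFn fun i => s (ins i.succ)
  let R : ℕ → ℕ := fun k => Nat.rec (f v) (fun y IH => g (y ::ᵥ IH ::ᵥ v)) k
  have hargs (k m : ℕ) : (List.Vector.ofFn fun i => Function.update (precStore s b (s (ins 0)) R k)
      (b + 2) m ((Fin.cons (b + 1) (Fin.cons b fun i => ins i.succ) : Fin (n + 2) → ℕ) i)) =
      k ::ᵥ R k ::ᵥ v := by
    have hunchanged (i : Fin n) : Function.update (precStore s b (s (ins 0)) R k) (b + 2) m
        (ins i.succ) = s (ins i.succ) := by
      have := hlt i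
      simp only [precStore, Function.update_apply]
      grind
    simp only [List.Vector.ofFn, Fin.cons_zero, Fin.cons_succ, hunchanged]
    simp [precStore, v]
  convert yields_precProgram (hins 0) ho hs hso (R := R) ?_ fun k m => ?_ using 2
  · simp [R, v, List.Vector.ofFn]
  · exact hbase s (fun r hr => hs r (by omega)) (hs b le_rfl)
  · rw [show R (k + 1) = g (k ::ᵥ R k ::ᵥ v) from rfl, ← hargs k m]
    have hzero (r : ℕ) (hr : b + 3 ≤ r) :
        Function.update (precStore s b (s (ins 0)) R k) (b + 2) m r = 0 := by
      have := hs r (by omega)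
      simp only [precStore, Function.update_apply]
      grind
    exact hstep _ (fun r hr => hzero r (by omega)) (hzero _ le_rfl)

theorem rfind {n : ℕ} {f : List.Vector ℕ (n + 1) → ℕ} (hf : Computes (fun v => Part.some (f v))) :
    Computes (fun v : List.Vector ℕ n =>
      Nat.rfind fun k => Part.some (decide (f (k ::ᵥ v) = 0))) := by
  intro ins o b hins ho hne
  obtain ⟨P, hP⟩ := total_iff.1 hf (Fin.cons o ins) b (b + 1)
    (Fin.cases (by simpa using ho.trans b.lt_succ_self) fun i => (hins i).trans (by omega))
    (by omega) (Fin.cases (by simpa using ho.ne) fun i => (hins i).ne)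
  refine ⟨seq P (loop b (seq (clear b) (seq (inc o) P))), fun s hs hso t => ?_⟩
  let v := List.Vector.ofFn fun i => s (ins i)
  let G : ℕ → Store := fun k => Function.update (Function.update s o k) b (f (k ::ᵥ v))
  have hrun (k : ℕ) : P.Yields (Function.update s o k) (G k) := by
    convert hP (Function.update s o k) (fun r hr => ?_) ?_ using 1
    · simp [G, v, List.Vector.ofFn, hne]
    · rw [Function.update_of_ne (by omega), hs r (by omega)]
    · rw [Function.update_of_ne ho.ne', hs b le_rfl]
  have hround (k m : ℕ) :
      (seq (clear b) (seq (inc o) P)).Yields (Function.update (G k) b m) (G (k + 1)) := by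
    refine (yields_clear b _).seq (Yields.seq ?_ (hrun (k + 1)))
    convert yields_inc o _ using 1
    have := hs b le_rfl
    funext r
    simp only [G, Function.update_apply]
    grind
  have hstart : P.Yields s (G 0) := by simpa [← hso] using hrun 0
  have hGb (k : ℕ) : G k b = f (k ::ᵥ v) := Function.update_self ..
  have hGzero (k : ℕ) (hk : f (k ::ᵥ v) = 0) : G k = Function.update s o k := by
    simp [G, hk, ho.ne', hs b le_rfl]
  rw [hstart.exec_seq_iff, exec_loop_iff_of_chain fun k _ => hround k _]
  simp only [hGb]
  constructor
  · rintro ⟨k, hk, hlt, rfl⟩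
    exact ⟨k, mem_rfind_decide_iff.2 ⟨hk, hlt⟩, hGzero k hk⟩
  · rintro ⟨k, hk, rfl⟩
    obtain ⟨hk0, hlt⟩ := mem_rfind_decide_iff.1 hk
    exact ⟨k, hk0, hlt, (hGzero k hk0).symm⟩

/-- The store `s` with the counters `b, …, b + n - 1` overwritten by `y 0, …, y (n - 1)`. -/
def fill (s : Store) (b n : ℕ) (y : ℕ → ℕ) : Store :=
  fun r => if b ≤ r ∧ r < b + n then y (r - b) else s r

theorem fill_zero (s : Store) (b : ℕ) (y : ℕ → ℕ) : fill s b 0 y = s := by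
  funext r
  exact if_neg (by omega)

theorem exists_program_yields_fill_zero (b n : ℕ) :
    ∃ P : Program, ∀ s, P.Yields s (fill s b n 0) := by
  induction n with
  | zero => exact ⟨skip, fun s => by simpa only [fill_zero] using yields_skip s⟩
  | succ n ih =>
    obtain ⟨P, hP⟩ := ih
    refine ⟨seq P (clear (b + n)), fun s => ?_⟩
    convert (hP s).seq (yields_clear (b + n) _) using 1
    funext r
    simp only [fill, Function.update_apply, Pi.zero_apply]
    grind

theorem exists_program_exec_iff_fill {m n : ℕ} {g : Fin n → List.Vector ℕ m →. ℕ}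
    (hg : ∀ i, Computes (g i)) {ins : Fin m → ℕ} {b : ℕ} (hins : ∀ i, ins i < b) :
    ∃ P : Program, ∀ s : Store, (∀ r, b ≤ r → s r = 0) → ∀ t, P.Exec s t ↔
      ∃ y : ℕ → ℕ, (∀ i, y i ∈ g i (List.Vector.ofFn fun i => s (ins i))) ∧ t = fill s b n y := by
  induction n with
  | zero => exact ⟨skip, fun s _ t => by simp [fill_zero, Exec]⟩
  | succ n ih =>
    obtain ⟨P, hP⟩ := ih fun i => hg i.castSucc
    obtain ⟨Q, hQ⟩ := hg (Fin.last n) ins (b + n) (b + n + 1)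
      (fun i => (hins i).trans (by omega)) (by omega) (fun i => ((hins i).trans_le (by omega)).ne)
    refine ⟨seq P Q, fun s hs t => ?_⟩
    have hzero (y : ℕ → ℕ) (r : ℕ) (hr : b + n ≤ r) : fill s b n y r = 0 := by
      grind [fill]
    have hargs (y : ℕ → ℕ) (i : Fin m) : fill s b n y (ins i) = s (ins i) := by
      have := hins i
      grind [fill]
    have hupdate (y : ℕ → ℕ) (z : ℕ) :
        Function.update (fill s b n y) (b + n) z = fill s b (n + 1) (Function.update y n z) := by
      funext r
      simp only [fill, Function.update_apply]
      grind
    have hQ' (y : ℕ → ℕ) (t : Store) := hQ (fill s b n y) (fun r hr => hzero y r (by omega))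
      (hzero y _ le_rfl) t
    simp only [hargs, hupdate] at hQ'
    simp only [Exec, hP s hs]
    constructor
    · rintro ⟨_, ⟨y, hy, rfl⟩, ht⟩
      obtain ⟨z, hz, rfl⟩ := (hQ' y t).1 ht
      refine ⟨_, Fin.lastCases ?_ fun i => ?_, rfl⟩
      · simpa using hz
      · simpa [i.isLt.ne] using hy i
    · rintro ⟨y, hy, rfl⟩
      refine ⟨_, ⟨y, fun i => hy i.castSucc, rfl⟩, (hQ' y _).2 ⟨_, hy (Fin.last n), ?_⟩⟩
      simp

theorem comp {m n : ℕ} {f : List.Vector ℕ n →. ℕ} {g : Fin n → List.Vector ℕ m →. ℕ}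
    (hf : Computes f) (hg : ∀ i, Computes (g i)) :
    Computes (fun v => (List.Vector.mOfFn fun i => g i v) >>= f) := by
  intro ins o b hins ho _
  obtain ⟨args, hargs⟩ := exists_program_exec_iff_fill hg hins
  obtain ⟨P, hP⟩ := hf (fun i => b + i) o (b + n) (fun i => by omega) (by omega) (fun i => by omega)
  obtain ⟨clean, hclean⟩ := exists_program_yields_fill_zero b n
  refine ⟨seq args (seq P clean), fun s hs hso t => ?_⟩
  have hclean' (y : ℕ → ℕ) (z : ℕ) :
      fill (Function.update (fill s b n y) o z) b n 0 = Function.update s o z := by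
    funext r
    have := hs r
    simp only [fill, Function.update_apply, Pi.zero_apply]
    grind
  have hrest (y : ℕ → ℕ) : (seq P clean).Exec (fill s b n y) t ↔
      ∃ z ∈ f (List.Vector.ofFn fun i : Fin n => y i), t = Function.update s o z := by
    have hPy (u : Store) := hP (fill s b n y) (fun r hr => by grind [fill]) (by grind [fill]) u
    have hfilled (i : Fin n) : fill s b n y (b + i) = y i := by simp [fill]
    simp only [hfilled] at hPy
    simp only [Exec, hPy, hclean _ t]
    constructor
    · rintro ⟨_, ⟨z, hz, rfl⟩, rfl⟩
      exact ⟨z, hz, hclean' y z⟩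
    · rintro ⟨z, hz, rfl⟩
      exact ⟨_, ⟨z, hz, rfl⟩, (hclean' y z).symm⟩
  rw [Exec]
  simp only [hargs s hs]
  constructor
  · rintro ⟨_, ⟨y, hy, rfl⟩, ht⟩
    obtain ⟨z, hz, ht⟩ := (hrest y).1 ht
    exact ⟨z, mem_mOfFn_bind_iff.2 ⟨y, hy, hz⟩, ht⟩
  · rintro ⟨z, hz, ht⟩
    obtain ⟨y, hy, hz⟩ := mem_mOfFn_bind_iff.1 hz
    exact ⟨_, ⟨y, hy, rfl⟩, (hrest y).2 ⟨z, hz, ht⟩⟩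

theorem of_primrec' {n : ℕ} {f : List.Vector ℕ n → ℕ} (hf : Nat.Primrec' f) :
    Computes (fun v => Part.some (f v)) := by
  induction hf with
  | zero => exact zero
  | succ => exact succ
  | get i => exact get i
  | comp g _ _ ihf ihg =>
    simpa only [Vector.mOfFn_part_some, Part.bind_eq_bind, Part.bind_some] using comp ihf ihg
  | prec _ _ ihf ihg => exact prec ihf ihg

theorem of_partrec' {n : ℕ} {f : List.Vector ℕ n →. ℕ} (hf : Nat.Partrec' f) : Computes f := by
  induction hf with
  | prim hf => exact of_primrec' hf
  | comp g _ _ ihf ihg => exact comp ihf ihg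
  | rfind _ ih => exact rfind ih

end Computes

theorem Program.exists_exec_not_computablePred :
    ∃ P : Program, ¬ ComputablePred fun n => ∃ t, P.Exec (Pi.single 0 n) t := by
  have hpartrec : Partrec fun n => (Denumerable.ofNat Nat.Partrec.Code n).eval 0 :=
    Nat.Partrec.Code.eval_part.comp (Computable.ofNat _) (Computable.const 0)
  obtain ⟨P, hP⟩ := Computes.of_partrec' (Nat.Partrec'.part_iff₁.2 hpartrec) (fun _ => 0) 1 2
    (fun _ => by omega) (by omega) (fun _ => by omega)
  have hhalt (n : ℕ) : (∃ t, P.Exec (Pi.single 0 n) t) ↔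
      ((Denumerable.ofNat Nat.Partrec.Code n).eval 0).Dom := by
    have hzero (r : ℕ) (hr : 2 ≤ r) : (Pi.single 0 n : Store) r = 0 := by
      simp [show r ≠ 0 by omega]
    simp [hP (Pi.single 0 n) hzero (by simp), Part.dom_iff_mem]
  refine ⟨P, fun hcomp => ComputablePred.halting_problem 0 ?_⟩
  obtain ⟨f, hf, heq⟩ := ComputablePred.computable_iff.1 hcomp
  refine ComputablePred.computable_iff.2 ⟨_, hf.comp Computable.encode, ?_⟩
  funext c
  have := congrFun heq (Encodable.encode c)
  rw [← this, hhalt, Denumerable.ofNat_encode]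

/-! ### Counter machines -/

/-- The instructions of counter machines. -/
inductive Op : Type where
  | nop : Op
  | inc : ℕ → Op
  | dec : ℕ → Op
  | zero : ℕ → Op
deriving Encodable, DecidableEq

/-- `o.Step s t`: the instruction `o` can be executed on the store `s`, and this leads to `t`.
The instruction `zero c` tests the counter `c` for zero, and `dec c` requires it to be positive. -/
def Op.Step : Op → Store → Store → Prop
  | nop, s, t => t = s
  | inc c, s, t => t = Function.update s c (s c + 1)
  | dec c, s, t => s c ≠ 0 ∧ t = Function.update s c (s c - 1)
  | zero c, s, t => s c = 0 ∧ t = s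

/-- A transition of a counter machine with set of states `Q`. -/
structure Transition (Q : Type*) where
  src : Q
  op : Op
  tgt : Q
deriving Encodable, DecidableEq

/-- The infinite sequence `a, f 0, f 1, …`. -/
def cons {α : Type*} (a : α) (f : ℕ → α) : ℕ → α
  | 0 => a
  | i + 1 => f i

/-- `IsRun T τ s`: the infinite sequence `τ` of transitions from `T` is a run of the counter
machine `T` in which the store before the `i`-th transition is `s i`. -/
def IsRun {Q : Type*} (T : List (Transition Q)) (τ : ℕ → Transition Q) (s : ℕ → Store) : Prop :=
  ∀ i, τ i ∈ T ∧ (τ i).tgt = (τ (i + 1)).src ∧ (τ i).op.Step (s i) (s (i + 1))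

theorem IsRun.cons {Q : Type*} {T : List (Transition Q)} {τ : ℕ → Transition Q} {s : ℕ → Store}
    (h : IsRun T τ s) {t : Transition Q} (ht : t ∈ T) (htgt : t.tgt = (τ 0).src) {u : Store}
    (hstep : t.op.Step u (s 0)) : IsRun T (cons t τ) (cons u s)
  | 0 => ⟨ht, htgt, hstep⟩
  | i + 1 => h i

/-- There is a run of `T` from the state `q` and the store `s` that visits the state `goal`. -/
def ExistsRunVisiting {Q : Type*} (T : List (Transition Q)) (q : Q) (s : Store) (goal : Q) : Prop :=
  ∃ τ σ, IsRun T τ σ ∧ (τ 0).src = q ∧ σ 0 = s ∧ ∃ i, (τ i).src = goal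

theorem ExistsRunVisiting.of_step {Q : Type*} {T : List (Transition Q)} {q goal : Q} {o : Op}
    {r : Q} (ht : ⟨q, o, r⟩ ∈ T) {s u : Store} (hstep : o.Step s u)
    (h : ExistsRunVisiting T r u goal) : ExistsRunVisiting T q s goal := by
  obtain ⟨τ, σ, hrun, rfl, rfl, i, hi⟩ := h
  exact ⟨_, _, hrun.cons ht rfl hstep, rfl, rfl, i + 1, hi⟩

namespace Program

/-- The transitions of a counter machine executing `P` and then the programs in `k`. The states
are lists of programs that remain to be executed. -/
def transitions : Program → List Program → List (Transition (List Program))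
  | skip, k => [⟨skip :: k, .nop, k⟩]
  | inc c, k => [⟨inc c :: k, .inc c, k⟩]
  | seq P Q, k => ⟨seq P Q :: k, .nop, P :: Q :: k⟩ :: (P.transitions (Q :: k) ++ Q.transitions k)
  | loop c P, k => ⟨loop c P :: k, .zero c, k⟩ ::
      ⟨loop c P :: k, .dec c, P :: loop c P :: k⟩ :: P.transitions (loop c P :: k)

/-- `Terminates k s`: the programs in the list `k` can be executed one after the other from the
store `s`. -/
def Terminates : List Program → Store → Prop
  | [], _ => True
  | P :: k, s => ∃ t, P.Exec s t ∧ Terminates k t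

theorem terminates_src_of_step {P : Program} {k : List Program} {t : Transition (List Program)}
    (ht : t ∈ P.transitions k) {s u : Store} (hstep : t.op.Step s u)
    (hu : Terminates t.tgt u) : Terminates t.src s := by
  induction P generalizing k with
  | skip =>
    obtain rfl := List.mem_singleton.1 ht
    obtain rfl := hstep
    exact ⟨u, rfl, hu⟩
  | inc c =>
    obtain rfl := List.mem_singleton.1 ht
    exact ⟨u, hstep, hu⟩
  | seq P Q ihP ihQ =>
    simp only [transitions, List.mem_cons, List.mem_append] at ht
    obtain rfl | ht | ht := ht
    · obtain rfl := hstep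
      obtain ⟨v, hP, w, hQ, hw⟩ := hu
      exact ⟨w, ⟨v, hP, hQ⟩, hw⟩
    · exact ihP ht
    · exact ihQ ht
  | loop c P ih =>
    simp only [transitions, List.mem_cons] at ht
    obtain rfl | rfl | ht := ht
    · obtain ⟨hc, rfl⟩ := hstep
      exact ⟨u, ⟨.refl, hc⟩, hu⟩
    · obtain ⟨hc, rfl⟩ := hstep
      obtain ⟨v, hP, w, ⟨hreach, hw0⟩, hw⟩ := hu
      exact ⟨w, ⟨.head ⟨hc, hP⟩ hreach, hw0⟩, hw⟩
    · exact ih ht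

theorem Exec.existsRunVisiting {T : List (Transition (List Program))} {P : Program}
    {k q : List Program} (hT : P.transitions k ⊆ T) {s t : Store} (hexec : P.Exec s t)
    (h : ExistsRunVisiting T k t q) : ExistsRunVisiting T (P :: k) s q := by
  induction P generalizing k s t with
  | skip =>
    obtain rfl := hexec
    exact h.of_step (hT List.mem_cons_self) rfl
  | inc c => exact h.of_step (hT List.mem_cons_self) hexec
  | seq P Q ihP ihQ =>
    simp only [transitions, List.cons_subset, List.append_subset] at hT
    obtain ⟨u, hP, hQ⟩ := hexec
    exact (ihP hT.2.1 hP (ihQ hT.2.2 hQ h)).of_step hT.1 rfl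
  | loop c P ih =>
    simp only [transitions, List.cons_subset] at hT
    obtain ⟨hreach, hc⟩ := hexec
    induction hreach using Relation.ReflTransGen.head_induction_on with
    | refl => exact h.of_step hT.1 ⟨hc, rfl⟩
    | head hround _ ihloop => exact (ih hT.2.2 hround.2 ihloop).of_step hT.2.1 ⟨hround.1, rfl⟩

/-- The transition by which the machine of a program increments its input counter. -/
def read : Transition (List Program) := ⟨[], .inc 0, []⟩

/-- The transition by which the machine of a program starts it. -/
def start (P : Program) : Transition (List Program) := ⟨[], .nop, [P]⟩

/-- The counter machine that guesses an input for `P` and runs `P` on it. The empty list is the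
initial state as well as the final one, so that finite halting runs extend to infinite runs. -/
def machine (P : Program) : List (Transition (List Program)) :=
  read :: start P :: P.transitions []

/-- The run `τ` of `P.machine` guesses the input `n`, runs `P` on it and halts. -/
def AcceptsInput (P : Program) (n : ℕ) (τ : ℕ → Transition (List Program)) : Prop :=
  (∀ i < n, τ i = read) ∧ τ n = start P ∧ ∃ i > n, (τ i).src = []

theorem AcceptsInput.cons_read {P : Program} {n : ℕ} {τ : ℕ → Transition (List Program)}
    (h : P.AcceptsInput n τ) : P.AcceptsInput (n + 1) (cons read τ) := by
  obtain ⟨hread, hstart, i, hi, hsrc⟩ := h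
  refine ⟨?_, hstart, i + 1, Nat.succ_lt_succ hi, hsrc⟩
  rintro (_ | j) hj
  exacts [rfl, hread j (Nat.lt_of_succ_lt_succ hj)]

theorem exists_run_read_forever (P : Program) (t : Store) :
    ExistsRunVisiting P.machine [] t [] :=
  ⟨fun _ => read, fun i => Function.update t 0 (t 0 + i),
    fun i => ⟨by simp [machine], rfl, by simp [read, Op.Step, add_assoc]⟩, rfl, by simp, 0, rfl⟩

theorem exists_run_of_exec {P : Program} {m n : ℕ} {t : Store}
    (h : P.Exec (Pi.single 0 (m + n)) t) :
    ∃ τ σ, IsRun P.machine τ σ ∧ σ 0 = Pi.single 0 m ∧ P.AcceptsInput n τ := by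
  induction n generalizing m with
  | zero =>
    obtain ⟨τ, σ, hrun, hsrc, h0, i, hi⟩ := h.existsRunVisiting (k := [])
      (by simp [machine]) (exists_run_read_forever P t)
    refine ⟨_, _, hrun.cons (t := start P) (by simp [machine]) hsrc.symm h0, rfl, ?_, rfl, ?_⟩
    · simp
    · exact ⟨i + 1, by simp, hi⟩
  | succ n ih =>
    obtain ⟨τ, σ, hrun, h0, hτ⟩ := ih (m := m + 1) (by rwa [add_assoc, add_comm 1])
    have hsrc : (τ 0).src = [] := by
      cases n with
      | zero => rw [hτ.2.1]; rfl
      | succ n => rw [hτ.1 0 (by simp)]; rfl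
    refine ⟨_, _, hrun.cons (t := read) (by simp [machine]) hsrc.symm ?_, rfl, hτ.cons_read⟩
    simp [h0, read, Op.Step, Pi.single]

theorem exists_exec_of_run {P : Program} {n : ℕ} {τ : ℕ → Transition (List Program)}
    {σ : ℕ → Store} (hrun : IsRun P.machine τ σ) (h0 : σ 0 = 0) (hτ : P.AcceptsInput n τ) :
    ∃ t, P.Exec (Pi.single 0 n) t := by
  obtain ⟨hread, hstart, j, hj, hsrc⟩ := hτ
  have hinput : ∀ i ≤ n, σ i = Pi.single 0 i := by
    intro i hi
    induction i with
    | zero => simpa using h0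
    | succ i ih =>
      have hstep := (hrun i).2.2
      rw [hread i (by omega), ih (by omega)] at hstep
      simpa [read, Op.Step, Pi.single] using hstep
  have hback (i : ℕ) (h : Terminates (τ (i + 1)).src (σ (i + 1))) :
      Terminates (τ i).src (σ i) := by
    obtain ⟨hmem, htgt, hstep⟩ := hrun i
    simp only [machine, List.mem_cons] at hmem
    obtain heq | heq | hmem := hmem
    · rw [heq]
      trivial
    · rw [heq]
      trivial
    · exact terminates_src_of_step hmem hstep (htgt ▸ h)
  have hterm : Terminates (τ (n + 1)).src (σ (n + 1)) :=
    Nat.decreasingInduction (motive := fun i _ => Terminates (τ i).src (σ i))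
      (fun i _ h => hback i h) (by rw [hsrc]; trivial) hj
  have hstep := (hrun n).2.2
  rw [← (hrun n).2.1, hstart] at hterm
  rw [hstart, hinput n le_rfl] at hstep
  obtain ⟨t, ht, _⟩ := hterm
  exact ⟨t, hstep ▸ ht⟩

theorem exists_exec_iff_exists_run {P : Program} {n : ℕ} :
    (∃ t, P.Exec (Pi.single 0 n) t) ↔
      ∃ τ σ, IsRun P.machine τ σ ∧ σ 0 = 0 ∧ P.AcceptsInput n τ := by
  constructor
  · rintro ⟨t, ht⟩
    simpa using exists_run_of_exec (m := 0) (by simpa using ht)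
  · rintro ⟨τ, σ, hrun, h0, hτ⟩
    exact exists_exec_of_run hrun h0 hτ

end Program

/-! ### Counters and data values -/

theorem count_le_count_of_injOn {α : Type*} {p q : ℕ → Prop} [DecidablePred p] [DecidablePred q]
    {d : ℕ → α} {n : ℕ} (hinj : Set.InjOn d {i | i < n ∧ p i})
    (h : ∀ i < n, p i → ∃ j < n, q j ∧ d j = d i) : Nat.count p n ≤ Nat.count q n := by
  choose! f hlt hq hd using h
  simp only [Nat.count_eq_card_filter_range]
  refine Finset.card_le_card_of_injOn f (fun i hi => ?_) fun i hi j hj hij => ?_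
  · obtain ⟨hin, hpi⟩ : i < n ∧ p i := by simpa using hi
    simpa using ⟨hlt i hin hpi, hq i hin hpi⟩
  · obtain ⟨hin, hpi⟩ : i < n ∧ p i := by simpa using hi
    obtain ⟨hjn, hpj⟩ : j < n ∧ p j := by simpa using hj
    exact hinj ⟨hin, hpi⟩ ⟨hjn, hpj⟩ (by rw [← hd i hin hpi, hij, hd j hjn hpj])

theorem exists_lt_count_eq {p : ℕ → Prop} [DecidablePred p] {k n : ℕ} (h : k < Nat.count p n) :
    ∃ j < n, p j ∧ Nat.count p j = k := by
  induction n with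
  | zero => simp at h
  | succ n ih =>
    by_cases hk : k < Nat.count p n
    · obtain ⟨j, hj, hp⟩ := ih hk
      exact ⟨j, by omega, hp⟩
    · rw [Nat.count_succ] at h
      exact ⟨n, by omega, by grind⟩

theorem Op.step_iff {o : Op} {s t : Store} : o.Step s t ↔ ∀ c,
    (t c + if o = .dec c then 1 else 0) = (s c + if o = .inc c then 1 else 0) ∧
      (o = .zero c → s c = 0) := by
  cases o with
  | nop => simp [Step, funext_iff]
  | zero a =>
    simp only [Step, funext_iff]
    grind
  | inc a =>
    simp only [Step, funext_iff, Function.update_apply]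
    grind
  | dec a =>
    simp only [Step, funext_iff, Function.update_apply]
    grind

/-- The number of increments of the counter `c` among the first `n` instructions. -/
def incCount (op : ℕ → Op) (c n : ℕ) : ℕ := Nat.count (fun i => op i = .inc c) n

/-- The number of decrements of the counter `c` among the first `n` instructions. -/
def decCount (op : ℕ → Op) (c n : ℕ) : ℕ := Nat.count (fun i => op i = .dec c) n

theorem incCount_succ (op : ℕ → Op) (c n : ℕ) :
    incCount op c (n + 1) = incCount op c n + if op n = .inc c then 1 else 0 :=
  Nat.count_succ ..

theorem decCount_succ (op : ℕ → Op) (c n : ℕ) :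
    decCount op c (n + 1) = decCount op c n + if op n = .dec c then 1 else 0 :=
  Nat.count_succ ..

/-- The counters never become negative, and are zero at their zero tests. -/
def IsBalanced (op : ℕ → Op) : Prop :=
  ∀ c n, decCount op c n ≤ incCount op c n ∧
    (op n = .zero c → incCount op c n ≤ decCount op c n)

theorem store_add_decCount {op : ℕ → Op} {s : ℕ → Store} (h0 : s 0 = 0)
    (hstep : ∀ i, (op i).Step (s i) (s (i + 1))) (c n : ℕ) :
    s n c + decCount op c n = incCount op c n := by
  induction n with
  | zero => simp [h0, decCount, incCount]
  | succ n ih =>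
    have hbalance := (Op.step_iff.1 (hstep n) c).1
    rw [incCount_succ, decCount_succ]
    omega

theorem IsBalanced.step {op : ℕ → Op} (h : IsBalanced op) (i : ℕ) :
    (op i).Step (fun c => incCount op c i - decCount op c i)
      (fun c => incCount op c (i + 1) - decCount op c (i + 1)) := by
  refine Op.step_iff.2 fun c => ⟨?_, fun hzero => Nat.sub_eq_zero_of_le ((h c i).2 hzero)⟩
  have hle := (h c i).1
  have hle' := (h c (i + 1)).1
  rw [incCount_succ, decCount_succ] at hle' ⊢
  omega

theorem exists_stores_iff_isBalanced {op : ℕ → Op} :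
    (∃ s : ℕ → Store, s 0 = 0 ∧ ∀ i, (op i).Step (s i) (s (i + 1))) ↔ IsBalanced op := by
  constructor
  · rintro ⟨s, h0, hstep⟩ c n
    have hcount := store_add_decCount h0 hstep c n
    refine ⟨by omega, fun hop => ?_⟩
    have hzero : s n c = 0 := (Op.step_iff.1 (hstep n) c).2 hop
    omega
  · intro h
    exact ⟨fun i c => incCount op c i - decCount op c i,
      by funext c; simp [incCount, decCount], h.step⟩

/-- What the data value at position `i` has to satisfy if the instruction `o` is executed there:
an increment carries a fresh value, which has to reappear at a decrement of the same counter
before the counter is next tested for zero, if it is; a decrement carries the value of an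
increment of the same counter, with no other position of that value in between. -/
def DataConstraint (op : ℕ → Op) (d : ℕ → ℕ) (i : ℕ) : Op → Prop
  | .inc c => (∀ k < i, d k ≠ d i) ∧ ((∀ j ≥ i, op j ≠ .zero c) ∨
      ∃ j ≥ i, d j = d i ∧ op j = .dec c ∧ ∀ k, i ≤ k → k < j → op k ≠ .zero c)
  | .dec c => ∃ j < i, d j = d i ∧ (∀ k < i, d k = d i → k ≤ j) ∧ op j = .inc c
  | _ => True

/-- The data values `d` match the decrements among the instructions `op` with increments. -/
def IsMatching (op : ℕ → Op) (d : ℕ → ℕ) : Prop :=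
  ∀ i, DataConstraint op d i (op i)

namespace IsMatching

variable {op : ℕ → Op} {d : ℕ → ℕ}

theorem inc (h : IsMatching op d) {c i : ℕ} (hi : op i = .inc c) :
    (∀ k < i, d k ≠ d i) ∧ ((∀ j ≥ i, op j ≠ .zero c) ∨
      ∃ j ≥ i, d j = d i ∧ op j = .dec c ∧ ∀ k, i ≤ k → k < j → op k ≠ .zero c) := by
  simpa only [hi, DataConstraint] using h i

theorem dec (h : IsMatching op d) {c i : ℕ} (hi : op i = .dec c) :
    ∃ j < i, d j = d i ∧ (∀ k < i, d k = d i → k ≤ j) ∧ op j = .inc c := by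
  simpa only [hi, DataConstraint] using h i

theorem injOn_inc (h : IsMatching op d) (c : ℕ) : Set.InjOn d {i | op i = .inc c} := by
  intro i hi j hj hij
  by_contra hne
  obtain hlt | hlt := lt_or_gt_of_ne hne
  · exact (h.inc hj).1 i hlt hij
  · exact (h.inc hi).1 j hlt hij.symm

theorem injOn_dec (h : IsMatching op d) (c : ℕ) : Set.InjOn d {i | op i = .dec c} := by
  have hne_of_lt {i j : ℕ} (hi : op i = .dec c) (hj : op j = .dec c) (hlt : i < j) :
      d i ≠ d j := by
    intro hij
    obtain ⟨k, _, hkd, hlast, hk⟩ := h.dec hj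
    have hik : i < k := lt_of_le_of_ne (hlast i hlt hij) (by rintro rfl; simp [hi] at hk)
    exact (h.inc hk).1 i hik (hij.trans hkd.symm)
  intro i hi j hj hij
  by_contra hne
  obtain hlt | hlt := lt_or_gt_of_ne hne
  · exact hne_of_lt hi hj hlt hij
  · exact hne_of_lt hj hi hlt hij.symm

theorem isBalanced (h : IsMatching op d) : IsBalanced op := by
  refine fun c n => ⟨?_, fun hzero => ?_⟩
  · refine count_le_count_of_injOn ((h.injOn_dec c).mono fun i hi => hi.2) fun i hin hi => ?_
    obtain ⟨j, hj, hd, -, hop⟩ := h.dec hi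
    exact ⟨j, hj.trans hin, hop, hd⟩
  · refine count_le_count_of_injOn ((h.injOn_inc c).mono fun i hi => hi.2) fun i hin hi => ?_
    obtain hnever | ⟨j, -, hd, hop, hbefore⟩ := (h.inc hi).2
    · exact absurd hzero (hnever n hin.le)
    · have hjn : j < n := by
        refine lt_of_le_of_ne (not_lt.1 fun hlt => hbefore n hin.le hlt hzero) ?_
        rintro rfl
        simp [hzero] at hop
      exact ⟨j, hjn, hop, hd⟩

end IsMatching

/-- The data values that identify each instruction by its position, except that the `k`-th
decrement of a counter receives the position of the `k`-th increment of that counter. -/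
noncomputable def matchingData (op : ℕ → Op) (i : ℕ) : ℕ :=
  match op i with
  | .dec c => Nat.nth (fun j => op j = .inc c) (decCount op c i)
  | _ => i

theorem matchingData_of_ne_dec {op : ℕ → Op} {i : ℕ} (hi : ∀ c, op i ≠ .dec c) :
    matchingData op i = i := by
  unfold matchingData
  split
  · exact absurd ‹_› (hi _)
  · rfl

namespace IsBalanced

variable {op : ℕ → Op}

theorem exists_matchingData_eq (h : IsBalanced op) {c i : ℕ} (hi : op i = .dec c) :
    ∃ j < i, op j = .inc c ∧ incCount op c j = decCount op c i ∧ matchingData op i = j := by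
  have hlt : decCount op c i < incCount op c i := by
    have hle := (h c (i + 1)).1
    rw [incCount_succ, decCount_succ] at hle
    simpa [hi] using hle
  obtain ⟨j, hj, hop, hcount⟩ := exists_lt_count_eq hlt
  refine ⟨j, hj, hop, hcount, ?_⟩
  simp only [matchingData, hi, ← hcount]
  exact Nat.nth_count hop

theorem matchingData_le (h : IsBalanced op) (i : ℕ) : matchingData op i ≤ i := by
  by_cases hi : ∃ c, op i = .dec c
  · obtain ⟨c, hi⟩ := hi
    obtain ⟨j, hj, -, -, hd⟩ := h.exists_matchingData_eq hi
    exact hd.trans_le hj.le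
  · exact (matchingData_of_ne_dec fun c hc => hi ⟨c, hc⟩).le

theorem exists_dec_before_zero (h : IsBalanced op) {c i z : ℕ} (hi : op i = .inc c) (hiz : i ≤ z)
    (hz : op z = .zero c) : ∃ j ≥ i, j < z ∧ op j = .dec c ∧ matchingData op j = i := by
  have hlt : incCount op c i < decCount op c z := by
    have hne : i ≠ z := by
      rintro rfl
      simp [hi] at hz
    exact (Nat.count_strict_mono hi (lt_of_le_of_ne hiz hne)).trans_le ((h c z).2 hz)
  obtain ⟨j, hj, hop, hcount⟩ := exists_lt_count_eq hlt
  obtain ⟨i', -, hi', hcount', hd⟩ := h.exists_matchingData_eq hop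
  obtain rfl : i' = i := Nat.count_injective hi' hi (hcount'.trans hcount)
  exact ⟨j, hd ▸ h.matchingData_le j, hj, hop, hd⟩

theorem isMatching (h : IsBalanced op) : IsMatching op (matchingData op) := by
  intro i
  cases hi : op i with
  | nop => trivial
  | zero c => trivial
  | inc c =>
    have hself : matchingData op i = i := matchingData_of_ne_dec (by simp [hi])
    refine ⟨fun k hk => ?_, ?_⟩
    · rw [hself]
      exact ((h.matchingData_le k).trans_lt hk).ne
    · by_cases hz : ∃ z, i ≤ z ∧ op z = .zero c
      · obtain ⟨j, hij, hjz, hop, hd⟩ :=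
          h.exists_dec_before_zero hi (Nat.find_spec hz).1 (Nat.find_spec hz).2
        exact .inr ⟨j, hij, hd.trans hself.symm, hop,
          fun k hik hkj hk => Nat.find_min hz (hkj.trans hjz) ⟨hik, hk⟩⟩
      · exact .inl fun j hij hj => hz ⟨j, hij, hj⟩
  | dec c =>
    obtain ⟨j, hji, hj, hcount, hd⟩ := h.exists_matchingData_eq hi
    refine ⟨j, hji, ?_, fun k hki hkd => ?_, hj⟩
    · rw [hd, matchingData_of_ne_dec (by simp [hj])]
    · rw [hd] at hkd
      by_cases hk : ∃ c', op k = .dec c'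
      · obtain ⟨c', hk⟩ := hk
        obtain ⟨j', -, hj', hcount', hd'⟩ := h.exists_matchingData_eq hk
        obtain rfl : j' = j := hd'.symm.trans hkd
        obtain rfl : c' = c := by simpa [hj'] using hj
        exact absurd (Nat.count_injective hk hi (hcount'.symm.trans hcount)) hki.ne
      · rw [matchingData_of_ne_dec fun c' hc' => hk ⟨c', hc'⟩] at hkd
        exact hkd.le

end IsBalanced

theorem exists_isMatching_iff {op : ℕ → Op} :
    (∃ d, IsMatching op d) ↔ ∃ s : ℕ → Store, s 0 = 0 ∧ ∀ i, (op i).Step (s i) (s (i + 1)) := by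
  rw [exists_stores_iff_isBalanced]
  exact ⟨fun ⟨_, h⟩ => h.isBalanced, fun h => ⟨_, h.isMatching⟩⟩

/-! ### The formula of a program -/

namespace PosFormula

/-- The disjunction of the atoms in a list. -/
def anyOf : List ℕ → PosFormula
  | [] => neg (or (atom 0) (neg (atom 0)))
  | p :: l => or (atom p) (anyOf l)

theorem satP_anyOf {w : Word} {i : ℕ} {l : List ℕ} :
    satP w i (anyOf l) ↔ ∃ p ∈ l, p ∈ w.lab i := by
  induction l with
  | nil => simp [anyOf, satP, em]
  | cons p l ih => simp [anyOf, satP, ih]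

/-- The inclusion of the position formulas into the formulas of the logic. -/
def toLFormula : PosFormula → LFormula
  | atom p => .atom p
  | neg φ => .neg φ.toLFormula
  | or φ ψ => .or φ.toLFormula ψ.toLFormula
  | X φ => .X φ.toLFormula
  | Y φ => .Y φ.toLFormula
  | U φ ψ => .U φ.toLFormula ψ.toLFormula
  | S φ ψ => .S φ.toLFormula ψ.toLFormula

theorem satL_toLFormula {w : Word} {i : ℕ} {φ : PosFormula} :
    satL w i φ.toLFormula ↔ satP w i φ := by
  induction φ generalizing i <;> simp only [toLFormula, satL, satP, *]

end PosFormula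

namespace LFormula

variable {w : Word} {i : ℕ} {φ ψ : LFormula}

/-- The true formula. -/
def top : LFormula := or (atom 0) (neg (atom 0))

/-- Conjunction. -/
def and (φ ψ : LFormula) : LFormula := neg (or (neg φ) (neg ψ))

/-- Implication. -/
def imp (φ ψ : LFormula) : LFormula := or (neg φ) ψ

/-- The temporal operator F: at some position from now on. -/
def eventually (φ : LFormula) : LFormula := U top φ

/-- The temporal operator G: at all positions from now on. -/
def always (φ : LFormula) : LFormula := neg (eventually (neg φ))

/-- The conjunction of the formulas in a list. -/
def allOf : List LFormula → LFormula
  | [] => top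
  | φ :: l => and φ (allOf l)

theorem satL_top : satL w i top := by
  simp [top, satL, em]

theorem satL_and : satL w i (and φ ψ) ↔ satL w i φ ∧ satL w i ψ := by
  simp [and, satL]

theorem satL_imp : satL w i (imp φ ψ) ↔ (satL w i φ → satL w i ψ) := by
  simp [imp, satL, imp_iff_not_or]

theorem satL_eventually : satL w i (eventually φ) ↔ ∃ j ≥ i, satL w j φ := by
  simp [eventually, satL, satL_top]

theorem satL_always : satL w i (always φ) ↔ ∀ j ≥ i, satL w j φ := by
  simp [always, satL, satL_eventually]

theorem satL_allOf {l : List LFormula} : satL w i (allOf l) ↔ ∀ φ ∈ l, satL w i φ := by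
  induction l with
  | nil => simp [allOf, satL_top]
  | cons φ l ih => simp [allOf, satL_and, ih]

theorem satL_Yeq_top : satL w i (Yeq top) ↔ ∃ k < i, w.d k = w.d i := by
  simp only [satL, satL_top, and_true]
  constructor
  · rintro ⟨k, hk, hd, -⟩
    exact ⟨k, hk, hd⟩
  · rintro ⟨k, hk, hd⟩
    let earlier : Finset ℕ := {j ∈ Finset.range i | w.d j = w.d i}
    have hmem {j : ℕ} : j ∈ earlier ↔ j < i ∧ w.d j = w.d i := by simp [earlier]
    obtain ⟨j, hj, hmax⟩ := earlier.exists_max_image id ⟨k, hmem.2 ⟨hk, hd⟩⟩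
    exact ⟨j, (hmem.1 hj).1, (hmem.1 hj).2, fun l hl hld => hmax l (hmem.2 ⟨hl, hld⟩)⟩

theorem satL_iterate_and_X {n : ℕ} :
    satL w i ((fun χ => and φ (X χ))^[n] ψ) ↔ (∀ j < n, satL w (i + j) φ) ∧ satL w (i + n) ψ := by
  induction n generalizing ψ with
  | zero => simp
  | succ n ih =>
    rw [Function.iterate_succ_apply, ih, satL_and, Nat.forall_lt_succ_right, and_assoc]
    rfl

/-- The code of the conjunction of the formulas with codes `a` and `b`. -/
def andCode (a b : ℕ) : ℕ := Nat.pair 1 (Nat.pair 2 (Nat.pair (Nat.pair 1 a) (Nat.pair 1 b)))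

theorem encodeL_and : encodeL (and φ ψ) = andCode (encodeL φ) (encodeL ψ) :=
  rfl

theorem primrec_andCode (a : ℕ) : Primrec (andCode a) :=
  Primrec₂.natPair.comp (.const 1) (Primrec₂.natPair.comp (.const 2)
    (Primrec₂.natPair.comp (.const (Nat.pair 1 a)) (Primrec₂.natPair.comp (.const 1) .id)))

theorem primrec_encodeL_iterate_and_X (φ ψ : LFormula) :
    Primrec fun n => encodeL ((fun χ => and φ (X χ))^[n] ψ) := by
  have hsemiconj : Function.Semiconj encodeL (fun χ => and φ (X χ))
      (fun c => andCode (encodeL φ) (Nat.pair 3 c)) := fun _ => encodeL_and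
  have hstep : Primrec₂ fun (_ : ℕ) c => andCode (encodeL φ) (Nat.pair 3 c) :=
    (primrec_andCode _).comp (Primrec₂.natPair.comp (.const 3) .snd)
  refine (Primrec.nat_iterate .id (.const (encodeL ψ)) hstep).of_eq fun n => ?_
  exact (hsemiconj.iterate_right n ψ).symm

end LFormula

section RunFormula

open LFormula

variable {Q : Type*} [Encodable Q] {T : List (Transition Q)}
  {τ : ℕ → Transition Q} {w : Word} {i : ℕ}

/-- One of the transitions in `T` is taken; the code of a transition is the atom standing for it. -/
def oneOf (T : List (Transition Q)) : PosFormula :=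
  .anyOf (T.map Encodable.encode)

theorem satP_oneOf : satP w i (oneOf T) ↔ ∃ t ∈ T, Encodable.encode t ∈ w.lab i := by
  simp [oneOf, PosFormula.satP_anyOf]

/-- At each position `i` of `w`, `τ i` is the only transition from `T` that is taken. -/
def IsLabeling (T : List (Transition Q)) (w : Word) (τ : ℕ → Transition Q) : Prop :=
  ∀ i, τ i ∈ T ∧ ∀ t ∈ T, (Encodable.encode t ∈ w.lab i ↔ t = τ i)

theorem IsLabeling.satP_oneOf_filter (h : IsLabeling T w τ) {p : Transition Q → Prop}
    [DecidablePred p] : satP w i (oneOf (T.filter p)) ↔ p (τ i) := by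
  simp only [satP_oneOf, List.mem_filter, decide_eq_true_eq]
  constructor
  · rintro ⟨t, ⟨ht, hp⟩, hlab⟩
    rwa [← ((h i).2 t ht).1 hlab]
  · intro hp
    exact ⟨τ i, ⟨(h i).1, hp⟩, ((h i).2 _ (h i).1).2 rfl⟩

theorem IsLabeling.satP_oneOf_singleton (h : IsLabeling T w τ) {t : Transition Q} (ht : t ∈ T) :
    satP w i (oneOf [t]) ↔ τ i = t := by
  simp [satP_oneOf, (h i).2 t ht, eq_comm]

/-- The formula for `DataConstraint`. -/
def dataFormula (T : List (Transition Q)) : Op → LFormula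
  | .inc c => and (neg (Yeq top)) (or
      (always (neg (oneOf (T.filter (·.op = .zero c))).toLFormula))
      (uat (.neg (oneOf (T.filter (·.op = .zero c)))) (oneOf (T.filter (·.op = .dec c)))))
  | .dec c => Yeq (oneOf (T.filter (·.op = .inc c))).toLFormula
  | _ => top

theorem IsLabeling.satL_dataFormula_iff (h : IsLabeling T w τ) {o : Op} :
    satL w i (dataFormula T o) ↔ DataConstraint (fun j => (τ j).op) w.d i o := by
  cases o with
  | nop => exact iff_of_true satL_top trivial
  | zero c => exact iff_of_true satL_top trivial
  | inc c =>
    rw [dataFormula, satL_and, satL, satL_Yeq_top, satL, satL_always]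
    simp only [satL, satP, PosFormula.satL_toLFormula, h.satP_oneOf_filter, DataConstraint]
    simp
  | dec c =>
    simp only [dataFormula, satL, PosFormula.satL_toLFormula, h.satP_oneOf_filter, DataConstraint]

variable [DecidableEq Q]

/-- Exactly one transition from `T` is taken at each position. -/
def labelingFormula (T : List (Transition Q)) : LFormula :=
  always (and (oneOf T).toLFormula (allOf (T.map fun t =>
    imp (oneOf [t]).toLFormula (neg (oneOf (T.filter (· ≠ t))).toLFormula))))

theorem satL_labelingFormula_iff :
    satL w 0 (labelingFormula T) ↔ ∃ τ, IsLabeling T w τ := by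
  simp only [labelingFormula, satL_always, satL_and, satL_allOf, List.forall_mem_map, satL_imp,
    satL, PosFormula.satL_toLFormula, satP_oneOf, List.mem_filter, decide_eq_true_eq]
  constructor
  · intro h
    choose τ hmem hlab using fun i => (h i (Nat.zero_le i)).1
    refine ⟨τ, fun i => ⟨hmem i, fun t ht => ⟨fun htlab => ?_, fun heq => heq ▸ hlab i⟩⟩⟩
    by_contra hne
    exact (h i (Nat.zero_le i)).2 (τ i) (hmem i) ⟨τ i, List.mem_singleton_self _, hlab i⟩
      ⟨t, ⟨ht, hne⟩, htlab⟩
  · rintro ⟨τ, hτ⟩ i -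
    refine ⟨⟨τ i, (hτ i).1, ((hτ i).2 _ (hτ i).1).2 rfl⟩, ?_⟩
    rintro t ht ⟨_, hs, htlab⟩ ⟨t', ⟨ht', hne⟩, htlab'⟩
    obtain rfl := List.mem_singleton.1 hs
    exact hne ((((hτ i).2 t' ht').1 htlab').trans (((hτ i).2 _ ht).1 htlab).symm)

/-- Consecutive transitions fit together, and the data values match their instructions. -/
def stepFormula (T : List (Transition Q)) : LFormula :=
  always (allOf (T.map fun t => imp (oneOf [t]).toLFormula
    (and (X (oneOf (T.filter (·.src = t.tgt))).toLFormula) (dataFormula T t.op))))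

theorem IsLabeling.satL_stepFormula_iff (h : IsLabeling T w τ) :
    satL w 0 (stepFormula T) ↔
      (∀ i, (τ i).tgt = (τ (i + 1)).src) ∧ IsMatching (fun i => (τ i).op) w.d := by
  simp only [stepFormula, satL_always, satL_allOf, List.forall_mem_map, satL_imp, satL_and, satL,
    PosFormula.satL_toLFormula, h.satP_oneOf_filter, h.satL_dataFormula_iff]
  rw [IsMatching, ← forall_and]
  constructor
  · intro hstep i
    obtain ⟨hsrc, hdata⟩ := hstep i (Nat.zero_le i) (τ i) (h i).1
      ((h.satP_oneOf_singleton (h i).1).2 rfl)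
    exact ⟨hsrc.symm, hdata⟩
  · intro hstep i _ t ht hlab
    obtain rfl := (h.satP_oneOf_singleton ht).1 hlab
    exact ⟨(hstep i).1.symm, (hstep i).2⟩

end RunFormula

namespace Program

open LFormula

/-- The run guesses the input `n`, runs `P` on it and halts. -/
def inputFormula (P : Program) (n : ℕ) : LFormula :=
  (fun φ => and (oneOf [read]).toLFormula (X φ))^[n] (and (oneOf [P.start]).toLFormula
    (X (eventually (oneOf (P.machine.filter (·.src = []))).toLFormula)))

theorem satL_inputFormula_iff {P : Program} {n : ℕ} {w : Word}
    {τ : ℕ → Transition (List Program)} (h : IsLabeling P.machine w τ) :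
    satL w 0 (P.inputFormula n) ↔ P.AcceptsInput n τ := by
  have hread : read ∈ P.machine := by simp [machine]
  have hstart : P.start ∈ P.machine := by simp [machine]
  simp only [inputFormula, satL_iterate_and_X, satL_and, satL, satL_eventually,
    PosFormula.satL_toLFormula, h.satP_oneOf_filter, h.satP_oneOf_singleton hread,
    h.satP_oneOf_singleton hstart, Nat.zero_add, AcceptsInput]
  rfl

/-- The formula expressing that `P` halts on input `n`. -/
def haltingFormula (P : Program) (n : ℕ) : LFormula :=
  and (and (labelingFormula P.machine) (stepFormula P.machine)) (P.inputFormula n)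

theorem satisfiable_haltingFormula_iff {P : Program} {n : ℕ} :
    Satisfiable (P.haltingFormula n) ↔ ∃ t, P.Exec (Pi.single 0 n) t := by
  rw [exists_exec_iff_exists_run]
  constructor
  · rintro ⟨w, hw⟩
    rw [haltingFormula, satL_and, satL_and] at hw
    obtain ⟨⟨hlabel, hstep⟩, hinput⟩ := hw
    obtain ⟨τ, hτ⟩ := satL_labelingFormula_iff.1 hlabel
    obtain ⟨hstate, hmatch⟩ := hτ.satL_stepFormula_iff.1 hstep
    obtain ⟨σ, h0, hσ⟩ := exists_isMatching_iff.1 ⟨_, hmatch⟩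
    exact ⟨τ, σ, fun i => ⟨(hτ i).1, hstate i, hσ i⟩, h0, (satL_inputFormula_iff hτ).1 hinput⟩
  · rintro ⟨τ, σ, hrun, h0, haccept⟩
    obtain ⟨d, hd⟩ := exists_isMatching_iff.2 ⟨σ, h0, fun i => (hrun i).2.2⟩
    let w : Word := ⟨fun i => {Encodable.encode (τ i)}, d⟩
    have hτ : IsLabeling P.machine w τ := fun i => ⟨(hrun i).1, fun t _ => Encodable.encode_inj⟩
    refine ⟨w, ?_⟩
    rw [haltingFormula, satL_and, satL_and]
    exact ⟨⟨satL_labelingFormula_iff.2 ⟨τ, hτ⟩,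
      hτ.satL_stepFormula_iff.2 ⟨fun i => (hrun i).2.1, hd⟩⟩, (satL_inputFormula_iff hτ).2 haccept⟩

theorem computable_encodeL_haltingFormula (P : Program) :
    Computable fun n => encodeL (P.haltingFormula n) :=
  ((primrec_andCode _).comp (primrec_encodeL_iterate_and_X _ _)).to_comp

end Program

/-- Satisfiability of `L`-formulas over infinite 1-attributed words is
undecidable: no computable function (on Gödel codes) decides it. -/
theorem undecidable_satisfiability_infinite :
    ¬ ∃ f : ℕ → Bool, Computable f ∧
      ∀ φ : LFormula, (f (encodeL φ) = true ↔ Satisfiable φ) := by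
  rintro ⟨f, hf, hsat⟩
  obtain ⟨P, hP⟩ := Program.exists_exec_not_computablePred
  refine hP (ComputablePred.computable_iff.2
    ⟨_, hf.comp P.computable_encodeL_haltingFormula, funext fun n => propext ?_⟩)
  rw [hsat, Program.satisfiable_haltingFormula_iff]

end Stmt1
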